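/- Let 1 ≤ k ≤ n-1 and let f be the matchless subexcedant function on [n] given by f(1)=1, f(i)=i-1 for 2 ≤ i ≤ k+1, and f(i)=k for k+1 ≤ i ≤ n (i.e., the word 1 1 2 3 ⋯ k-1 k k ⋯ k). Let σ = (n f(n)) ∘ ⋯ ∘ (2 f(2)) ∘ (1 f(1)). Then σ is the n-cycle (1 k+1 k+2 ⋯ n k k-1 ⋯ 2); moreover (-1)^{inv(σ)} = (-1)^{n-1}, EXCv(σ) = [n] \ [k], and RLMv(σ) = [k]. -/

import Mathlib

open Finset

/-- Number of inversions of a permutation of `Fin n`. -/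
def inversions {n : ℕ} (π : Equiv.Perm (Fin n)) : ℕ :=
  (Finset.univ.filter fun p : Fin n × Fin n => p.1 < p.2 ∧ π p.2 < π p.1).card

/-- Excedance indices of a permutation. -/
def EXCi {n : ℕ} (π : Equiv.Perm (Fin n)) : Finset (Fin n) :=
  Finset.univ.filter fun i => i < π i

/-- Excedance values of a permutation. -/
def EXCv {n : ℕ} (π : Equiv.Perm (Fin n)) : Finset (Fin n) :=
  (EXCi π).image π

/-- The permutation `(n f(n)) ∘ ⋯ ∘ (2 f(2)) ∘ (1 f(1))` associated to a
subexcedant function `f` (the transposition `(1 f(1))` is applied first). -/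
def sefPerm {n : ℕ} (f : Fin n → Fin n) : Equiv.Perm (Fin n) :=
  ((List.ofFn fun i : Fin n => Equiv.swap i (f i)).reverse).prod

/-- Right-to-left minima values of a permutation. -/
def RLMv {n : ℕ} (π : Equiv.Perm (Fin n)) : Finset (Fin n) :=
  ((Finset.univ.filter fun i => ∀ j, i < j → π i < π j).image π)

/-!
Follow a point `i` while the transpositions `(j f(j))` are applied for increasing `j`. Since
`f(j) ≤ j`, the point does not move before step `i`, at which it jumps to `f(i)`; from then on, a
point sitting at `x` moves exactly at the steps `j` with `f(j) = x`, when it jumps to `j`. For the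
matchless word every value other than `1` and `k` is taken at most once, so these trajectories are
easily read off and give `σ`. The sign of `σ` is `-1` to the number of non-fixed points of `f`.
Both remaining statistics depend on `σ⁻¹ = 2 3 ⋯ k n 1 (k+1) ⋯ (n-1)` only: excedance values of `σ`
are the `j` with `σ⁻¹(j) < j`, and right-to-left minima values are the left-to-right maxima of
`σ⁻¹`.
-/

section Statistics

variable {n : ℕ} (π : Equiv.Perm (Fin n))

lemma sign_eq_neg_one_pow_inversions : Equiv.Perm.sign π = (-1) ^ inversions π := by
  rw [Equiv.Perm.sign_eq_prod_prod_Ioi, inversions, ← Finset.prod_const, Finset.prod_filter,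
    Fintype.prod_prod_type]
  refine Finset.prod_congr rfl fun i _ => ?_
  rw [← Finset.filter_lt_eq_Ioi, Finset.prod_filter]
  refine Finset.prod_congr rfl fun j _ => ?_
  by_cases hij : i < j
  · rcases lt_or_gt_of_ne (π.injective.ne hij.ne) with h | h <;> simp [hij, h, h.not_gt]
  · simp [hij]

variable {π} {j : Fin n}

lemma mem_EXCv : j ∈ EXCv π ↔ π.symm j < j := by
  simp only [EXCv, EXCi, Finset.mem_image, Finset.mem_filter_univ]
  constructor
  · rintro ⟨i, hi, rfl⟩
    rwa [π.symm_apply_apply]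
  · exact fun h => ⟨π.symm j, by rwa [π.apply_symm_apply], π.apply_symm_apply j⟩

lemma mem_RLMv : j ∈ RLMv π ↔ ∀ l < j, π.symm l < π.symm j := by
  simp only [RLMv, Finset.mem_image, Finset.mem_filter_univ]
  constructor
  · rintro ⟨i, hi, rfl⟩ l hl
    rw [π.symm_apply_apply]
    by_contra! h
    rcases h.eq_or_lt with rfl | h
    · exact hl.ne (π.apply_symm_apply l).symm
    · exact hl.not_gt (by simpa only [π.apply_symm_apply] using hi _ h)
  · refine fun h => ⟨π.symm j, fun i hi => ?_, π.apply_symm_apply j⟩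
    rw [π.apply_symm_apply]
    by_contra! hij
    rcases hij.eq_or_lt with rfl | hij
    · exact hi.ne (π.symm_apply_apply i)
    · exact hi.not_gt (by simpa only [π.symm_apply_apply] using h _ hij)

end Statistics

section Subexcedant

/-- Subexcedant functions: those with `f(i) ≤ i` for all `i`. -/
def IsSubexcedant {n : ℕ} (f : Fin n → Fin n) : Prop :=
  ∀ i, f i ≤ i

/-- The partial product `(m f(m)) ∘ ⋯ ∘ (1 f(1))` of `sefPerm f`, through which trajectories of
points are followed; in 0-based terms it involves the transpositions at indices `< m`. -/
def sefPrefix {n : ℕ} (f : Fin n → Fin n) (m : ℕ) : Equiv.Perm (Fin n) :=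
  ((List.ofFn fun i : Fin n => Equiv.swap i (f i)).take m).reverse.prod

variable {n : ℕ} {f : Fin n → Fin n} {i j x : Fin n} {m : ℕ}

lemma sefPrefix_zero : sefPrefix f 0 = 1 := by
  simp [sefPrefix]

lemma sefPrefix_succ (j : Fin n) :
    sefPrefix f (j + 1) = Equiv.swap j (f j) * sefPrefix f j := by
  simp [sefPrefix, List.take_add_one]

lemma sefPrefix_self : sefPrefix f n = sefPerm f := by
  rw [sefPrefix, sefPerm, List.take_of_length_le List.length_ofFn.le]

lemma sefPrefix_apply_of_le (hf : IsSubexcedant f) (hmi : m ≤ i) : sefPrefix f m i = i := by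
  induction m with
  | zero => rw [sefPrefix_zero, Equiv.Perm.one_apply]
  | succ m ih =>
    let j : Fin n := ⟨m, by omega⟩
    have hji : j < i := Fin.lt_def.2 hmi
    rw [sefPrefix_succ j, Equiv.Perm.mul_apply, ih (by omega),
      Equiv.swap_apply_of_ne_of_ne hji.ne' ((hf j).trans_lt hji).ne']

lemma sefPrefix_succ_apply_self (hf : IsSubexcedant f) (i : Fin n) :
    sefPrefix f (i + 1) i = f i := by
  rw [sefPrefix_succ, Equiv.Perm.mul_apply, sefPrefix_apply_of_le hf le_rfl,
    Equiv.swap_apply_left]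

lemma sefPrefix_succ_apply_of_apply_eq (h : sefPrefix f j i = f j) :
    sefPrefix f (j + 1) i = j := by
  rw [sefPrefix_succ, Equiv.Perm.mul_apply, h, Equiv.swap_apply_right]

lemma sefPerm_apply_of_sefPrefix_apply (hxj : x ≤ j) (h : sefPrefix f (j + 1) i = x)
    (hne : ∀ l, j < l → f l ≠ x) : sefPerm f i = x := by
  suffices ∀ m, (j : ℕ) + 1 ≤ m → m ≤ n → sefPrefix f m i = x by
    rw [← sefPrefix_self, this n j.isLt le_rfl]
  intro m hjm
  induction m, hjm using Nat.le_induction with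
  | base => exact fun _ => h
  | succ m hjm ih =>
    intro hm
    let l : Fin n := ⟨m, hm⟩
    have hjl : j < l := Fin.lt_def.2 hjm
    rw [sefPrefix_succ l, Equiv.Perm.mul_apply, ih (by omega),
      Equiv.swap_apply_of_ne_of_ne (hxj.trans_lt hjl).ne (hne l hjl).symm]

lemma sefPerm_apply_of_forall_ne (hf : IsSubexcedant f) (hne : ∀ l, i < l → f l ≠ f i) :
    sefPerm f i = f i :=
  sefPerm_apply_of_sefPrefix_apply (hf i) (sefPrefix_succ_apply_self hf i) hne

lemma sign_sefPerm (f : Fin n → Fin n) :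
    Equiv.Perm.sign (sefPerm f) = (-1) ^ #{i | i ≠ f i} := by
  rw [sefPerm, map_list_prod, List.map_reverse, List.prod_reverse, List.map_ofFn,
    List.prod_ofFn, ← Finset.prod_const, Finset.prod_filter]
  simp only [Function.comp_apply, Equiv.Perm.sign_swap', ite_not]

end Subexcedant

/-- The matchless word `1 1 2 3 ⋯ k-1 k k ⋯ k` of length `n`, where `1 ≤ k ≤ n - 1`. In 0-based
terms its entry at `i` is `min i k - 1`, truncated to `0` at `i = 0`. -/
structure IsMatchless {n : ℕ} (k : ℕ) (f : Fin n → Fin n) : Prop where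
  one_le : 1 ≤ k
  lt : k < n
  val_apply : ∀ i, (f i : ℕ) = min (i : ℕ) k - 1

namespace IsMatchless

variable {n k : ℕ} {f : Fin n → Fin n}

lemma isSubexcedant (hf : IsMatchless k f) : IsSubexcedant f := fun i => by
  rw [Fin.le_def, hf.val_apply]
  omega

lemma sign_sefPerm (hf : IsMatchless k f) :
    Equiv.Perm.sign (sefPerm f) = (-1) ^ (n - 1) := by
  have hlt := hf.lt
  have hfix : ({i | i ≠ f i} : Finset (Fin n)) = {⟨0, by omega⟩}ᶜ := by
    ext i
    simp only [Finset.mem_filter_univ, Finset.mem_compl, Finset.mem_singleton, Fin.ext_iff,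
      hf.val_apply, ne_eq]
    omega
  rw [_root_.sign_sefPerm, hfix, Finset.card_compl, Finset.card_singleton, Fintype.card_fin]

lemma sefPrefix_succ_apply_of_eq_zero (hf : IsMatchless k f) {i : Fin n} (hi : (i : ℕ) = 0)
    (j : Fin n) (hj : (j : ℕ) ≤ k) : sefPrefix f (j + 1) i = j := by
  obtain ⟨m, hm⟩ := j
  induction m with
  | zero =>
    obtain rfl : i = ⟨0, hm⟩ := Fin.ext hi
    rw [sefPrefix_succ_apply_self hf.isSubexcedant, Fin.ext_iff, hf.val_apply]
    simp
  | succ m ih =>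
    refine sefPrefix_succ_apply_of_apply_eq ((ih (by omega) (by grind)).trans (Fin.ext ?_))
    rw [hf.val_apply]
    grind

lemma val_sefPerm_of_eq_zero (hf : IsMatchless k f) {i : Fin n} (hi : (i : ℕ) = 0) :
    (sefPerm f i : ℕ) = k := by
  let j : Fin n := ⟨k, hf.lt⟩
  have hne : ∀ l, j < l → f l ≠ j := fun l _ => by
    have := hf.one_le
    rw [ne_eq, Fin.ext_iff, hf.val_apply]
    grind
  rw [sefPerm_apply_of_sefPrefix_apply le_rfl (hf.sefPrefix_succ_apply_of_eq_zero hi j le_rfl) hne]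

lemma val_sefPerm_of_lt (hf : IsMatchless k f) {i : Fin n} (hi : (i : ℕ) ≠ 0)
    (hik : (i : ℕ) < k) : (sefPerm f i : ℕ) = i - 1 := by
  have hne : ∀ l, i < l → f l ≠ f i := fun l hl => by
    rw [Fin.lt_def] at hl
    rw [ne_eq, Fin.ext_iff, hf.val_apply, hf.val_apply]
    omega
  rw [sefPerm_apply_of_forall_ne hf.isSubexcedant hne, hf.val_apply, min_eq_left hik.le]

lemma val_sefPerm_of_le (hf : IsMatchless k f) {i : Fin n} (hki : k ≤ i)
    (hi : (i : ℕ) + 1 < n) : (sefPerm f i : ℕ) = i + 1 := by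
  let j : Fin n := ⟨i + 1, hi⟩
  have hfij : f i = f j := Fin.ext <| by
    rw [hf.val_apply, hf.val_apply, min_eq_right hki, min_eq_right (Nat.le_succ_of_le hki)]
  have hj : sefPrefix f (j + 1) i = j :=
    sefPrefix_succ_apply_of_apply_eq ((sefPrefix_succ_apply_self hf.isSubexcedant i).trans hfij)
  have hne : ∀ l, j < l → f l ≠ j := fun l _ => by
    rw [ne_eq, Fin.ext_iff, hf.val_apply]
    grind
  rw [sefPerm_apply_of_sefPrefix_apply le_rfl hj hne]

lemma val_sefPerm_of_eq_last (hf : IsMatchless k f) {i : Fin n} (hi : (i : ℕ) + 1 = n) :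
    (sefPerm f i : ℕ) = k - 1 := by
  have hlt := hf.lt
  have hne : ∀ l, i < l → f l ≠ f i := fun l hl => by
    rw [Fin.lt_def] at hl
    omega
  rw [sefPerm_apply_of_forall_ne hf.isSubexcedant hne, hf.val_apply, min_eq_right (by omega)]

lemma val_sefPerm_add_one (hf : IsMatchless k f) (i : Fin n) :
    (sefPerm f i : ℕ) + 1 =
      if (i : ℕ) = 0 then k + 1
      else if (i : ℕ) < k then (i : ℕ)
      else if (i : ℕ) < n - 1 then (i : ℕ) + 2
      else k := by
  have hk := hf.one_le
  split_ifs with hi0 hik hin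
  · rw [hf.val_sefPerm_of_eq_zero hi0]
  · rw [hf.val_sefPerm_of_lt hi0 hik]
    omega
  · rw [hf.val_sefPerm_of_le (by omega) (by omega)]
  · rw [hf.val_sefPerm_of_eq_last (by omega)]
    omega

lemma val_sefPerm_symm (hf : IsMatchless k f) (j : Fin n) :
    ((sefPerm f).symm j : ℕ) =
      if (j : ℕ) + 1 < k then (j : ℕ) + 1
      else if (j : ℕ) + 1 = k then n - 1
      else if (j : ℕ) = k then 0
      else (j : ℕ) - 1 := by
  have h := hf.val_sefPerm_add_one ((sefPerm f).symm j)
  rw [Equiv.apply_symm_apply] at h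
  have hj := j.isLt
  have hi := ((sefPerm f).symm j).isLt
  split_ifs at h ⊢ <;> omega

lemma EXCv_sefPerm (hf : IsMatchless k f) :
    EXCv (sefPerm f) = Finset.univ.filter (fun j : Fin n => k ≤ (j : ℕ)) := by
  ext j
  rw [mem_EXCv, Finset.mem_filter_univ, Fin.lt_def, hf.val_sefPerm_symm]
  have hk := hf.one_le
  have hj := j.isLt
  split_ifs <;> omega

lemma RLMv_sefPerm (hf : IsMatchless k f) :
    RLMv (sefPerm f) = Finset.univ.filter (fun j : Fin n => (j : ℕ) < k) := by
  have hk := hf.one_le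
  have hkn := hf.lt
  ext j
  have hj := j.isLt
  simp only [mem_RLMv, Finset.mem_filter_univ, Fin.lt_def, hf.val_sefPerm_symm]
  constructor
  · intro hmax
    by_contra! hkj
    -- `σ⁻¹` takes its largest value at `k` (in 0-based terms, at `k - 1`).
    have h := hmax ⟨k - 1, by omega⟩ (by grind)
    grind
  · intro hjk l hlj
    split_ifs <;> omega

end IsMatchless

/-- Here `Fin n` represents `[n]` via `i ↦ i + 1`, so `(f i : ℕ) + 1` is
the value of `f` at the (1-based) position `(i : ℕ) + 1`.  The hypothesis
`hf` says `f` is the matchless word `1 1 2 3 ⋯ (k-1) k k ⋯ k`, and the first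
conjunct of the conclusion says that `σ = sefPerm f` is the `n`-cycle
`(1 (k+1) (k+2) ⋯ n k (k-1) ⋯ 2)`. -/
theorem stmt17 (n k : ℕ) (hk1 : 1 ≤ k) (hk2 : k ≤ n - 1)
    (f : Fin n → Fin n)
    (hf : ∀ i : Fin n, ((f i : ℕ) + 1) =
        if (i : ℕ) = 0 then 1 else if (i : ℕ) ≤ k then (i : ℕ) else k) :
    (∀ i : Fin n, ((sefPerm f i : ℕ) + 1) =
        if (i : ℕ) = 0 then k + 1
        else if (i : ℕ) < k then (i : ℕ)
        else if (i : ℕ) < n - 1 then (i : ℕ) + 2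
        else k)
    ∧ ((-1 : ℤ) ^ inversions (sefPerm f) = (-1) ^ (n - 1))
    ∧ EXCv (sefPerm f) = Finset.univ.filter (fun j : Fin n => k ≤ (j : ℕ))
    ∧ RLMv (sefPerm f) = Finset.univ.filter (fun j : Fin n => (j : ℕ) < k) := by
  have hM : IsMatchless k f := ⟨hk1, by omega, fun i => by grind⟩
  have hsign : (-1 : ℤˣ) ^ inversions (sefPerm f) = (-1) ^ (n - 1) := by
    rw [← sign_eq_neg_one_pow_inversions, hM.sign_sefPerm]
  exact ⟨hM.val_sefPerm_add_one, by simpa using congrArg Units.val hsign,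
    hM.EXCv_sefPerm, hM.RLMv_sefPerm⟩
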